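/- Let m ≥ 1, κ, Γ > 0, α ∈ (0,1), μ > 0, t₁ ≥ 0. Let N : ℝ → ℝ^{n×m} and M : ℝ → ℝ^{m×m} be continuous with M(t) symmetric positive semidefinite for all t ≥ 0 and M(t) ⪰ μ·I_m for all t ≥ t₁. Let θ : ℝ → ℝ^m be differentiable and satisfy θ'(t) = −κ·N(t)ᵀ(⌈N(t)θ(t)⌋^{1−α} + ⌈N(t)θ(t)⌋^{1+α}) − Γ·M(t)ᵀ(⌈M(t)θ(t)⌋^{1−α} + ⌈M(t)θ(t)⌋^{1+α}). Then the function V(t) = (1/2)‖θ(t)‖₂² satisfies, for every t ≥ t₁, V'(t) ≤ −2^{(2−α)/2}·Γ·μ^{2−α}·V(t)^{(2−α)/2} − 2^{(2+α)/2}·m^{−α/2}·Γ·μ^{2+α}·V(t)^{(2+α)/2}. -/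

import Mathlib

open scoped Matrix
open Finset

/-- The componentwise signed power `⌈v⌋^β`, with `i`-th component `|v_i|^β · sgn(v_i)`. -/
noncomputable def signedPow {d : ℕ} (β : ℝ) (v : Fin d → ℝ) : Fin d → ℝ :=
  fun i => |v i| ^ β * Real.sign (v i)

/-!
Along the error dynamics,
`V' = -κ ⟨Nθ, ⌈Nθ⌋^{1-α} + ⌈Nθ⌋^{1+α}⟩ - Γ ⟨Mθ, ⌈Mθ⌋^{1-α} + ⌈Mθ⌋^{1+α}⟩`, and
`⟨y, ⌈y⌋^β⟩ = ∑ |yᵢ|^{1+β}`. The `N` term is therefore dissipative and can be dropped. For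
`y = Mθ` the remaining power sums of exponents `2 - α` and `2 + α` dominate powers of `∑ yᵢ²`, by
subadditivity of `s ↦ s^{(2-α)/2}` and by the power mean inequality (whence `m^{-α/2}`)
respectively. Finally `M ⪰ μI` gives `∑ yᵢ² ≥ μ² ∑ θᵢ² = 2 μ² V`.
-/

section PowerSums

variable {ι : Type*} {p : ℝ}

lemma abs_rpow_eq_sq_rpow_half (a p : ℝ) : |a| ^ p = (a ^ 2) ^ (p / 2) := by
  rw [← sq_abs, ← Real.rpow_natCast_mul (abs_nonneg a)]
  congr 1
  push_cast
  ring

lemma rpow_sum_le_sum_rpow_of_le_one (s : Finset ι) {f : ι → ℝ} (hf : ∀ i ∈ s, 0 ≤ f i)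
    (hp : 0 < p) (hp1 : p ≤ 1) : (∑ i ∈ s, f i) ^ p ≤ ∑ i ∈ s, f i ^ p :=
  le_sum_of_subadditive_on_pred (· ^ p) (0 ≤ ·) (Real.zero_rpow hp.ne').le
    (fun _ _ ha hb => Real.rpow_add_le_add_rpow ha hb hp.le hp1) (fun _ _ => add_nonneg) f hf

lemma rpow_sum_sq_le_sum_abs_rpow (s : Finset ι) (f : ι → ℝ) (hp : 0 < p) (hp2 : p ≤ 2) :
    (∑ i ∈ s, f i ^ 2) ^ (p / 2) ≤ ∑ i ∈ s, |f i| ^ p := by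
  simp only [abs_rpow_eq_sq_rpow_half]
  exact rpow_sum_le_sum_rpow_of_le_one s (fun i _ => sq_nonneg (f i)) (by linarith) (by linarith)

lemma card_rpow_mul_rpow_sum_sq_le_sum_abs_rpow (s : Finset ι) (f : ι → ℝ) (hp : 2 ≤ p) :
    (#s : ℝ) ^ (1 - p / 2) * (∑ i ∈ s, f i ^ 2) ^ (p / 2) ≤ ∑ i ∈ s, |f i| ^ p := by
  rw [← neg_sub, Real.rpow_neg (Nat.cast_nonneg _)]
  simp only [abs_rpow_eq_sq_rpow_half]
  exact inv_mul_le_of_le_mul₀ (by positivity) (by positivity)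
    (Real.rpow_sum_le_const_mul_sum_rpow_of_nonneg s (by linarith) fun i _ => sq_nonneg (f i))

lemma two_rpow_mul_rpow_mul_half_rpow {μ T : ℝ} (hμ : 0 ≤ μ) (hT : 0 ≤ T) (p : ℝ) :
    (2 : ℝ) ^ (p / 2) * μ ^ p * ((1 / 2) * T) ^ (p / 2) = (μ ^ 2 * T) ^ (p / 2) := by
  have hμp : μ ^ p = (μ ^ 2) ^ (p / 2) := by
    simpa only [abs_of_nonneg hμ] using abs_rpow_eq_sq_rpow_half μ p
  rw [hμp, ← Real.mul_rpow (by positivity) (by positivity),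
    ← Real.mul_rpow (by positivity) (by positivity)]
  ring_nf

end PowerSums

section QuadraticForms

variable {ι R : Type*} [Fintype ι]

lemma sq_mul_sum_sq_le_of_mul_sum_sq_le_dotProduct [CommRing R] [LinearOrder R]
    [IsStrictOrderedRing R] {μ : R} (hμ : 0 ≤ μ) {x y : ι → R}
    (h : μ * ∑ i, x i ^ 2 ≤ x ⬝ᵥ y) : μ ^ 2 * ∑ i, x i ^ 2 ≤ ∑ i, y i ^ 2 := by
  have expand : ∑ i, (y i - μ * x i) ^ 2
      = ∑ i, y i ^ 2 - 2 * μ * (x ⬝ᵥ y) + μ ^ 2 * ∑ i, x i ^ 2 := by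
    simp only [dotProduct, mul_sum, ← sum_sub_distrib, ← sum_add_distrib]
    exact sum_congr rfl fun i _ => by ring
  have hsq : 0 ≤ ∑ i, (y i - μ * x i) ^ 2 := sum_nonneg fun i _ => sq_nonneg _
  linarith [mul_le_mul_of_nonneg_left h hμ]

lemma mul_sum_sq_le_dotProduct_mulVec [DecidableEq ι] {A : Matrix ι ι ℝ} {μ : ℝ}
    (hA : (A - μ • (1 : Matrix ι ι ℝ)).PosSemidef) (x : ι → ℝ) :
    μ * ∑ i, x i ^ 2 ≤ x ⬝ᵥ A *ᵥ x := by
  have h := hA.dotProduct_mulVec_nonneg x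
  rw [star_trivial, Matrix.sub_mulVec, Matrix.smul_mulVec, Matrix.one_mulVec, dotProduct_sub,
    dotProduct_smul, smul_eq_mul, sub_nonneg] at h
  simpa only [dotProduct, ← sq] using h

lemma hasDerivAt_half_sum_sq {θ : ℝ → ι → ℝ} {θ' : ι → ℝ} {t : ℝ} (hθ : HasDerivAt θ θ' t) :
    HasDerivAt (fun s => (1 / 2) * ∑ i, θ s i ^ 2) (θ t ⬝ᵥ θ') t := by
  have hcoord := hasDerivAt_pi.1 hθ
  refine ((HasDerivAt.fun_sum fun i _ => (hcoord i).fun_pow 2).const_mul (1 / 2 : ℝ)).congr_deriv ?_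
  simp only [dotProduct, mul_sum]
  exact sum_congr rfl fun i _ => by push_cast; ring

end QuadraticForms

section Feedback

variable {d m : ℕ} {α β : ℝ}

lemma dotProduct_signedPow (hβ : 1 + β ≠ 0) (v : Fin d → ℝ) :
    v ⬝ᵥ signedPow β v = ∑ i, |v i| ^ (1 + β) := by
  refine sum_congr rfl fun i _ => ?_
  have hsign : v i * Real.sign (v i) = |v i| := by
    rcases lt_trichotomy (v i) 0 with h | h | h
    · rw [Real.sign_of_neg h, abs_of_neg h, mul_neg_one]
    · rw [h, zero_mul, abs_zero]
    · rw [Real.sign_of_pos h, abs_of_pos h, mul_one]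
  rw [signedPow, mul_left_comm, hsign, mul_comm, Real.rpow_one_add' (abs_nonneg _) hβ]

/-- The correction term `Aᵀ (⌈A x⌋^{1-α} + ⌈A x⌋^{1+α})` of the fixed-time update law, where `A` is
the value at a given instant of the filtered regressor or of the information matrix, and `x` is the
parameter error. -/
noncomputable def fixedTimeFeedback (α : ℝ) (A : Matrix (Fin d) (Fin m) ℝ) (x : Fin m → ℝ) :
    Fin m → ℝ :=
  Aᵀ *ᵥ (signedPow (1 - α) (A *ᵥ x) + signedPow (1 + α) (A *ᵥ x))

lemma dotProduct_fixedTimeFeedback (hα : |α| < 2) (A : Matrix (Fin d) (Fin m) ℝ)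
    (x : Fin m → ℝ) :
    x ⬝ᵥ fixedTimeFeedback α A x
      = ∑ i, |(A *ᵥ x) i| ^ (2 - α) + ∑ i, |(A *ᵥ x) i| ^ (2 + α) := by
  obtain ⟨hα_neg, hα_pos⟩ := abs_lt.1 hα
  rw [fixedTimeFeedback, Matrix.dotProduct_mulVec, Matrix.vecMul_transpose, dotProduct_add,
    dotProduct_signedPow (by linarith), dotProduct_signedPow (by linarith)]
  ring_nf

lemma dotProduct_fixedTimeFeedback_nonneg (hα : |α| < 2) (A : Matrix (Fin d) (Fin m) ℝ)
    (x : Fin m → ℝ) : 0 ≤ x ⬝ᵥ fixedTimeFeedback α A x := by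
  rw [dotProduct_fixedTimeFeedback hα]
  positivity

lemma rpow_add_card_rpow_mul_rpow_le_dotProduct_fixedTimeFeedback (hα₀ : 0 ≤ α) (hα₂ : α < 2)
    {A : Matrix (Fin d) (Fin m) ℝ} {x : Fin m → ℝ} {c : ℝ} (hc : 0 ≤ c)
    (hcA : c ≤ ∑ i, (A *ᵥ x) i ^ 2) :
    c ^ ((2 - α) / 2) + (d : ℝ) ^ (-α / 2) * c ^ ((2 + α) / 2)
      ≤ x ⬝ᵥ fixedTimeFeedback α A x := by
  have hlow : c ^ ((2 - α) / 2) ≤ ∑ i, |(A *ᵥ x) i| ^ (2 - α) :=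
    (Real.rpow_le_rpow hc hcA (by linarith)).trans
      (rpow_sum_sq_le_sum_abs_rpow univ _ (by linarith) (by linarith))
  have hhigh : (d : ℝ) ^ (-α / 2) * c ^ ((2 + α) / 2) ≤ ∑ i, |(A *ᵥ x) i| ^ (2 + α) := by
    calc (d : ℝ) ^ (-α / 2) * c ^ ((2 + α) / 2)
        ≤ (d : ℝ) ^ (-α / 2) * (∑ i, (A *ᵥ x) i ^ 2) ^ ((2 + α) / 2) := by gcongr
      _ = (#(univ : Finset (Fin d)) : ℝ) ^ (1 - (2 + α) / 2)
            * (∑ i, (A *ᵥ x) i ^ 2) ^ ((2 + α) / 2) := by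
          rw [card_fin]
          ring_nf
      _ ≤ ∑ i, |(A *ᵥ x) i| ^ (2 + α) :=
          card_rpow_mul_rpow_sum_sq_le_sum_abs_rpow univ _ (by linarith)
  rw [dotProduct_fixedTimeFeedback (by rwa [abs_of_nonneg hα₀])]
  exact add_le_add hlow hhigh

end Feedback

theorem fxt_lyapunov_inequality_general {n k m : ℕ} {κ Γ α μ t : ℝ}
    (hκ : 0 ≤ κ) (hΓ : 0 ≤ Γ) (hα₀ : 0 ≤ α) (hα₂ : α < 2) (hμ : 0 ≤ μ)
    (N : Matrix (Fin n) (Fin m) ℝ) (M : Matrix (Fin k) (Fin m) ℝ) {θ : ℝ → Fin m → ℝ}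
    (hM : μ ^ 2 * ∑ i, θ t i ^ 2 ≤ ∑ i, (M *ᵥ θ t) i ^ 2)
    (hθ : HasDerivAt θ
      ((-κ) • fixedTimeFeedback α N (θ t) - Γ • fixedTimeFeedback α M (θ t)) t) :
    deriv (fun s => (1 / 2) * ∑ i, θ s i ^ 2) t
      ≤ -((2 : ℝ) ^ ((2 - α) / 2) * Γ * μ ^ (2 - α)
            * ((1 / 2) * ∑ i, θ t i ^ 2) ^ ((2 - α) / 2))
        - (2 : ℝ) ^ ((2 + α) / 2) * (k : ℝ) ^ (-α / 2) * Γ * μ ^ (2 + α)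
            * ((1 / 2) * ∑ i, θ t i ^ 2) ^ ((2 + α) / 2) := by
  have hT : 0 ≤ ∑ i, θ t i ^ 2 := sum_nonneg fun i _ => sq_nonneg _
  have hN_dissipates : 0 ≤ κ * (θ t ⬝ᵥ fixedTimeFeedback α N (θ t)) :=
    mul_nonneg hκ (dotProduct_fixedTimeFeedback_nonneg (by rwa [abs_of_nonneg hα₀]) N (θ t))
  have hM_dissipates := mul_le_mul_of_nonneg_left
    (rpow_add_card_rpow_mul_rpow_le_dotProduct_fixedTimeFeedback hα₀ hα₂ (by positivity) hM) hΓ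
  rw [← two_rpow_mul_rpow_mul_half_rpow hμ hT, ← two_rpow_mul_rpow_mul_half_rpow hμ hT]
    at hM_dissipates
  rw [(hasDerivAt_half_sum_sq hθ).deriv, dotProduct_sub, dotProduct_smul, dotProduct_smul,
    smul_eq_mul, smul_eq_mul]
  linarith

/-- **Fixed-time Lyapunov differential inequality for the parameter-error dynamics.**
Under the disturbance-free fixed-time update law, with `M(t) ⪰ μI` for `t ≥ t₁`,
the function `V(t) = ½‖θ(t)‖₂²` satisfies, for `t ≥ t₁`,
`V' ≤ −2^{(2−α)/2} Γ μ^{2−α} V^{(2−α)/2} − 2^{(2+α)/2} m^{−α/2} Γ μ^{2+α} V^{(2+α)/2}`. -/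
theorem fxt_lyapunov_inequality (n m : ℕ) (hm : 1 ≤ m) (κ Γ α μ t₁ : ℝ)
    (hκ : 0 < κ) (hΓ : 0 < Γ) (hα : α ∈ Set.Ioo (0:ℝ) 1) (hμ : 0 < μ) (ht₁ : 0 ≤ t₁)
    (N : ℝ → Matrix (Fin n) (Fin m) ℝ) (M : ℝ → Matrix (Fin m) (Fin m) ℝ)
    (hNc : Continuous N) (hMc : Continuous M)
    (hMpsd : ∀ t : ℝ, 0 ≤ t → (M t).PosSemidef)
    (hMμ : ∀ t : ℝ, t₁ ≤ t → (M t - μ • (1 : Matrix (Fin m) (Fin m) ℝ)).PosSemidef)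
    (θ θ' : ℝ → Fin m → ℝ)
    (hθ : ∀ t, HasDerivAt θ (θ' t) t)
    (hode : ∀ t : ℝ, θ' t =
        (-κ) • ((N t)ᵀ *ᵥ (signedPow (1 - α) (N t *ᵥ θ t) + signedPow (1 + α) (N t *ᵥ θ t)))
        - Γ • ((M t)ᵀ *ᵥ (signedPow (1 - α) (M t *ᵥ θ t) + signedPow (1 + α) (M t *ᵥ θ t)))) :
    ∀ t : ℝ, t₁ ≤ t →
      deriv (fun s => (1 / 2) * ∑ i, θ s i ^ 2) t
        ≤ -((2:ℝ) ^ ((2 - α) / 2) * Γ * μ ^ (2 - α)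
              * ((1 / 2) * ∑ i, θ t i ^ 2) ^ ((2 - α) / 2))
          - (2:ℝ) ^ ((2 + α) / 2) * (m : ℝ) ^ (-α / 2) * Γ * μ ^ (2 + α)
              * ((1 / 2) * ∑ i, θ t i ^ 2) ^ ((2 + α) / 2) := by
  intro t ht
  have hM := sq_mul_sum_sq_le_of_mul_sum_sq_le_dotProduct hμ.le
    (mul_sum_sq_le_dotProduct_mulVec (hMμ t ht) (θ t))
  exact fxt_lyapunov_inequality_general hκ.le hΓ.le hα.1.le (hα.2.trans one_lt_two) hμ.le
    (N t) (M t) hM (hode t ▸ hθ t)
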